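/- Let μ, ν ∈ M⁰_T and λ ∈ [0,1]. Then A(λμ + (1−λ)ν)^{1/2} ≥ λ A(μ)^{1/2} + (1−λ) A(ν)^{1/2} (Brunn–Minkowski inequality expressed via Hurwitz's area formula). In particular A(λμ + (1−λ)ν) ≥ min{A(μ), A(ν)}. -/

import Mathlib

open MeasureTheory Real Set

/-- Fourier coefficient `a_k(μ) = (1/π) E[cos(k X_μ)]`. -/
noncomputable def aF (μ : Measure ℝ) (k : ℕ) : ℝ := (1/π) * ∫ x, Real.cos (k * x) ∂μ

/-- Fourier coefficient `b_k(μ) = (1/π) E[sin(k X_μ)]`. -/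
noncomputable def bF (μ : Measure ℝ) (k : ℕ) : ℝ := (1/π) * ∫ x, Real.sin (k * x) ∂μ

/-- Hurwitz area: `A(μ) = 1/(4π) − (π/2) Σ_{k≥2} (a_k² + b_k²)/(k²−1)`. -/
noncomputable def areaH (μ : Measure ℝ) : ℝ :=
  1/(4*π) - (π/2) * ∑' k : ℕ, (aF μ (k+2)^2 + bF μ (k+2)^2) / (((k:ℝ)+2)^2 - 1)

/-!
Everything rests on two facts about the squared Fourier coefficients `‖φ(k)‖²` of `μ`.

Positivity of `areaH`: `-log (1 - z) = ∑ zⁿ / n` has an imaginary part of the same sign as `Im z`.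
For `z = r exp (i t)` this says that the power series in `r` with coefficients
`(cos (n t) - cos ((n + 2) t)) / (n + 1)` is nonnegative on `(0, 1)`. Integrating `t` against the
law of `X - X'`, where `X` and `X'` are independent with law `μ`, replaces `cos (n t)` by `‖φ(n)‖²`.
Letting `r → 1` (Abel) and summing by parts then gives the isoperimetric inequality
`2 ∑_{k ≥ 2} ‖φ(k)‖² / (k² - 1) ≤ ‖φ(0)‖² + ‖φ(1)‖² / 2`.

Concavity of `areaH`: `φ` is affine in `μ` and `‖·‖²` is convex. This, like the concavity of `√`
that turns it into the Brunn–Minkowski inequality, is the Cauchy–Schwarz inequality for the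
weights `(l, 1 - l)`.
-/

open Filter Topology

section SummationByParts

lemma add_two_sq_sub_one_pos (k : ℕ) : 0 < ((k : ℝ) + 2) ^ 2 - 1 := by
  nlinarith [(Nat.cast_nonneg k : (0 : ℝ) ≤ k)]

variable {u : ℕ → ℝ} {C : ℝ}

lemma summable_div_add_two_sq_sub_one (hu : ∀ n, |u n| ≤ C) :
    Summable fun k : ℕ => u k / (((k : ℝ) + 2) ^ 2 - 1) := by
  have hsq : Summable fun k : ℕ => C * (1 / ((k : ℝ) + 1) ^ 2) :=
    Summable.mul_left C <| by
      simpa using (summable_nat_add_iff 1).2 (Real.summable_one_div_nat_pow.2 one_lt_two)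
  refine hsq.of_norm_bounded fun k => ?_
  have hk : ((k : ℝ) + 1) ^ 2 ≤ ((k : ℝ) + 2) ^ 2 - 1 := by
    nlinarith [(Nat.cast_nonneg k : (0 : ℝ) ≤ k)]
  rw [norm_div, Real.norm_eq_abs, Real.norm_of_nonneg (add_two_sq_sub_one_pos k).le,
    mul_one_div]
  have hC : 0 ≤ C := (abs_nonneg _).trans (hu 0)
  gcongr
  exact hu k

lemma sum_range_sub_add_two_div (u : ℕ → ℝ) (N : ℕ) :
    ∑ n ∈ Finset.range (N + 2), (u n - u (n + 2)) / ((n : ℝ) + 1) =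
      u 0 + u 1 / 2 - 2 * ∑ k ∈ Finset.range N, u (k + 2) / (((k : ℝ) + 2) ^ 2 - 1)
        - u (N + 2) / ((N : ℝ) + 1) - u (N + 3) / ((N : ℝ) + 2) := by
  induction N with
  | zero => norm_num [Finset.sum_range_succ]; ring
  | succ N ih =>
    have hfactor : ((N : ℝ) + 2) ^ 2 - 1 = (N + 1) * (N + 3) := by ring
    rw [Finset.sum_range_succ, ih, Finset.sum_range_succ, hfactor]
    push_cast
    field_simp
    ring

lemma tendsto_sum_range_sub_add_two_div (hu : ∀ n, |u n| ≤ C) :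
    Tendsto (fun N => ∑ n ∈ Finset.range N, (u n - u (n + 2)) / ((n : ℝ) + 1)) atTop
      (𝓝 (u 0 + u 1 / 2 - 2 * ∑' k : ℕ, u (k + 2) / (((k : ℝ) + 2) ^ 2 - 1))) := by
  have hboundary (m : ℕ) (c : ℝ) : Tendsto (fun N : ℕ => u (N + m) / ((N : ℝ) + c)) atTop (𝓝 0) :=
    tendsto_bdd_div_atTop_nhds_zero (.of_forall fun _ => (abs_le.1 (hu _)).1)
      (.of_forall fun _ => (abs_le.1 (hu _)).2)
      (tendsto_atTop_add_const_right _ c tendsto_natCast_atTop_atTop)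
  have hsum := (summable_div_add_two_sq_sub_one fun k => hu (k + 2)).hasSum.tendsto_sum_nat
  rw [← tendsto_add_atTop_iff_nat 2]
  simp_rw [sum_range_sub_add_two_div]
  simpa using ((hsum.const_mul 2).const_sub (u 0 + u 1 / 2)).sub (hboundary 2 1)
    |>.sub (hboundary 3 2)

lemma two_mul_tsum_div_le_of_powerSeries_nonneg (hu : ∀ n, |u n| ≤ C)
    (hpos : ∀ r ∈ Ioo (0 : ℝ) 1, 0 ≤ ∑' n : ℕ, (u n - u (n + 2)) / ((n : ℝ) + 1) * r ^ n) :
    2 * ∑' k : ℕ, u (k + 2) / (((k : ℝ) + 2) ^ 2 - 1) ≤ u 0 + u 1 / 2 := by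
  have hAbel := Real.tendsto_tsum_powerSeries_nhdsWithin_lt (tendsto_sum_range_sub_add_two_div hu)
  exact sub_nonneg.1 <| ge_of_tendsto hAbel <|
    eventually_of_mem (Ioo_mem_nhdsLT zero_lt_one) hpos

end SummationByParts

section LogarithmicKernel

lemma im_mul_im_neg_log_one_sub_nonneg (z : ℂ) : 0 ≤ z.im * (-Complex.log (1 - z)).im := by
  have him : (1 - z).im = -z.im := by simp
  rw [Complex.neg_im, Complex.log_im]
  rcases le_or_gt z.im 0 with hz | hz
  · have harg : 0 ≤ (1 - z).arg := Complex.arg_nonneg_iff.2 (by linarith)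
    nlinarith
  · have harg : (1 - z).arg < 0 := Complex.arg_neg_iff.2 (by linarith)
    nlinarith

lemma hasSum_pow_mul_sin_div {r : ℝ} (hr : |r| < 1) (t : ℝ) :
    HasSum (fun n : ℕ => r ^ (n + 1) * Real.sin ((n + 1) * t) / ((n : ℝ) + 1))
      (-Complex.log (1 - r * Complex.exp (t * Complex.I))).im := by
  have hz : ‖(r : ℂ) * Complex.exp (t * Complex.I)‖ < 1 := by
    simpa [Complex.norm_exp_ofReal_mul_I] using hr
  refine (Complex.hasSum_im (Complex.hasSum_taylorSeries_neg_log' hz)).congr_fun fun n => ?_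
  have hpow : ((r : ℂ) * Complex.exp (t * Complex.I)) ^ (n + 1) / (n + 1) =
      ((r ^ (n + 1) / (n + 1) : ℝ) : ℂ) * Complex.exp (((n + 1) * t : ℝ) * Complex.I) := by
    rw [mul_pow, ← Complex.exp_nat_mul]
    push_cast
    ring_nf
  rw [hpow, Complex.im_ofReal_mul, Complex.exp_ofReal_mul_I_im]
  ring

lemma tsum_cos_sub_cos_div_mul_pow_nonneg {r : ℝ} (hr : r ∈ Ioo (0 : ℝ) 1) (t : ℝ) :
    0 ≤ ∑' n : ℕ, (Real.cos (n * t) - Real.cos ((n + 2) * t)) / ((n : ℝ) + 1) * r ^ n := by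
  set z : ℂ := r * Complex.exp (t * Complex.I)
  have hz : z.im = r * Real.sin t := by
    rw [Complex.im_ofReal_mul, Complex.exp_ofReal_mul_I_im]
  have hr0 : r ≠ 0 := hr.1.ne'
  have hsum := (hasSum_pow_mul_sin_div (abs_lt.2 ⟨by linarith [hr.1], hr.2⟩) t).mul_left
    (2 * Real.sin t / r)
  have hterm (n : ℕ) : (Real.cos (n * t) - Real.cos ((n + 2) * t)) / ((n : ℝ) + 1) * r ^ n =
      2 * Real.sin t / r * (r ^ (n + 1) * Real.sin ((n + 1) * t) / ((n : ℝ) + 1)) := by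
    have hcos : Real.cos (n * t) - Real.cos ((n + 2) * t) =
        2 * Real.sin ((n + 1) * t) * Real.sin t := by
      rw [Real.two_mul_sin_mul_sin]
      ring_nf
    rw [hcos, pow_succ]
    field_simp
  rw [tsum_congr hterm, hsum.tsum_eq]
  calc 0 ≤ 2 / r ^ 2 * (z.im * (-Complex.log (1 - z)).im) :=
        mul_nonneg (by positivity) (im_mul_im_neg_log_one_sub_nonneg z)
    _ = 2 * Real.sin t / r * (-Complex.log (1 - z)).im := by rw [hz]; field_simp

end LogarithmicKernel

section CharFun

instance isFiniteMeasure_ofReal_smul {α : Type*} [MeasurableSpace α] (μ : Measure α)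
    [IsFiniteMeasure μ] (a : ℝ) : IsFiniteMeasure (ENNReal.ofReal a • μ) :=
  μ.smul_finite ENNReal.ofReal_ne_top

section InnerProductSpace

open scoped InnerProductSpace

variable {E : Type*} [NormedAddCommGroup E] [InnerProductSpace ℝ E] [MeasurableSpace E]
  (μ ν : Measure E) [IsFiniteMeasure μ] [IsFiniteMeasure ν] (t : E)

lemma charFun_conv_map_neg [BorelSpace E] [SecondCountableTopology E] :
    charFun (μ.conv (μ.map ((-1 : ℝ) • ·))) t = ((‖charFun μ t‖ ^ 2 : ℝ) : ℂ) := by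
  rw [charFun_conv, charFun_map_smul, neg_one_smul, charFun_neg, Complex.mul_conj']
  push_cast
  rfl

variable [OpensMeasurableSpace E]

lemma integrable_exp_inner_mul_I : Integrable (fun x : E => Complex.exp (⟪x, t⟫_ℝ * Complex.I)) μ :=
  .of_bound (by fun_prop) 1 (.of_forall fun _ => (Complex.norm_exp_ofReal_mul_I _).le)

lemma re_charFun : (charFun μ t).re = ∫ x, Real.cos ⟪x, t⟫_ℝ ∂μ := by
  simp only [← Complex.exp_ofReal_mul_I_re]
  exact (integral_re (integrable_exp_inner_mul_I μ t)).symm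

lemma im_charFun : (charFun μ t).im = ∫ x, Real.sin ⟪x, t⟫_ℝ ∂μ := by
  simp only [← Complex.exp_ofReal_mul_I_im]
  exact (integral_im (integrable_exp_inner_mul_I μ t)).symm

lemma charFun_ofReal_smul_add_ofReal_smul {a b : ℝ} (ha : 0 ≤ a) (hb : 0 ≤ b) :
    charFun (ENNReal.ofReal a • μ + ENNReal.ofReal b • ν) t =
      a • charFun μ t + b • charFun ν t := by
  rw [charFun_apply, integral_add_measure (integrable_exp_inner_mul_I _ t)
    (integrable_exp_inner_mul_I _ t), integral_smul_measure, integral_smul_measure,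
    ENNReal.toReal_ofReal ha, ENNReal.toReal_ofReal hb, charFun_apply, charFun_apply]

lemma norm_charFun_convexComb_sq_le {a b : ℝ} (ha : 0 ≤ a) (hb : 0 ≤ b) (hab : a + b = 1) :
    ‖charFun (ENNReal.ofReal a • μ + ENNReal.ofReal b • ν) t‖ ^ 2 ≤
      a * ‖charFun μ t‖ ^ 2 + b * ‖charFun ν t‖ ^ 2 := by
  rw [charFun_ofReal_smul_add_ofReal_smul μ ν t ha hb]
  exact (convexOn_univ_norm.pow (fun _ _ => norm_nonneg _) 2).2 (mem_univ _) (mem_univ _) ha hb hab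

end InnerProductSpace

lemma re_charFun_real (μ : Measure ℝ) [IsFiniteMeasure μ] (t : ℝ) :
    (charFun μ t).re = ∫ x, Real.cos (t * x) ∂μ :=
  re_charFun μ t

lemma im_charFun_real (μ : Measure ℝ) [IsFiniteMeasure μ] (t : ℝ) :
    (charFun μ t).im = ∫ x, Real.sin (t * x) ∂μ :=
  im_charFun μ t

lemma tsum_re_charFun_sub_div_mul_pow_nonneg (μ : Measure ℝ) [IsFiniteMeasure μ] {r : ℝ}
    (hr : r ∈ Ioo (0 : ℝ) 1) :
    0 ≤ ∑' n : ℕ,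
      ((charFun μ n).re - (charFun μ (n + 2 : ℕ)).re) / ((n : ℝ) + 1) * r ^ n := by
  let F (n : ℕ) (x : ℝ) : ℝ :=
    (Real.cos (n * x) - Real.cos ((n + 2) * x)) / ((n : ℝ) + 1) * r ^ n
  have hcos (c : ℝ) : Integrable (fun x => Real.cos (c * x)) μ :=
    .of_bound (by fun_prop) 1 (.of_forall fun _ => Real.abs_cos_le_one _)
  have hF (n : ℕ) : Integrable (F n) μ := (((hcos n).sub (hcos (n + 2))).div_const _).mul_const _
  have hbound (n : ℕ) (x : ℝ) : ‖F n x‖ ≤ 2 * r ^ n := by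
    have hnum : |Real.cos (n * x) - Real.cos ((n + 2) * x)| ≤ 2 := by
      linarith [abs_sub (Real.cos (n * x)) (Real.cos ((n + 2) * x)),
        Real.abs_cos_le_one (n * x), Real.abs_cos_le_one ((n + 2) * x)]
    have hr0 := hr.1
    rw [norm_mul, norm_div, Real.norm_eq_abs, Real.norm_of_nonneg (by positivity : 0 ≤ (n : ℝ) + 1),
      Real.norm_of_nonneg (by positivity : 0 ≤ r ^ n)]
    gcongr
    exact (div_le_self (abs_nonneg _) (by simp)).trans hnum
  have hnorm : Summable fun n => ∫ x, ‖F n x‖ ∂μ := by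
    refine ((summable_geometric_of_lt_one hr.1.le hr.2).mul_left (μ.real univ * 2)).of_nonneg_of_le
      (fun n => integral_nonneg fun _ => norm_nonneg _) fun n => ?_
    simpa [mul_assoc] using integral_mono (hF n).norm (integrable_const _) (hbound n)
  have hterm (n : ℕ) : ∫ x, F n x ∂μ =
      ((charFun μ n).re - (charFun μ (n + 2 : ℕ)).re) / ((n : ℝ) + 1) * r ^ n := by
    rw [integral_mul_const, integral_div, integral_sub (hcos n) (hcos (n + 2)), re_charFun_real,
      re_charFun_real]
    push_cast
    rfl
  rw [← tsum_congr hterm, (hasSum_integral_of_summable_integral_norm hF hnorm).tsum_eq]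
  exact integral_nonneg fun x => tsum_cos_sub_cos_div_mul_pow_nonneg hr x

lemma two_mul_tsum_re_charFun_div_le (μ : Measure ℝ) [IsFiniteMeasure μ] :
    2 * ∑' k : ℕ, (charFun μ (k + 2 : ℕ)).re / (((k : ℝ) + 2) ^ 2 - 1) ≤
      (charFun μ 0).re + (charFun μ 1).re / 2 := by
  simpa only [Nat.cast_zero, Nat.cast_one] using two_mul_tsum_div_le_of_powerSeries_nonneg
    (u := fun n => (charFun μ n).re)
    (fun n => (Complex.abs_re_le_norm _).trans (norm_charFun_le _))
    fun r hr => tsum_re_charFun_sub_div_mul_pow_nonneg μ hr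

lemma summable_norm_charFun_sq_div (μ : Measure ℝ) [IsFiniteMeasure μ] :
    Summable fun k : ℕ => ‖charFun μ (k + 2 : ℕ)‖ ^ 2 / (((k : ℝ) + 2) ^ 2 - 1) := by
  refine summable_div_add_two_sq_sub_one (C := μ.real univ ^ 2) fun k => ?_
  rw [abs_of_nonneg (sq_nonneg _)]
  gcongr
  exact norm_charFun_le _

lemma two_mul_tsum_norm_charFun_sq_div_le (μ : Measure ℝ) [IsFiniteMeasure μ] :
    2 * ∑' k : ℕ, ‖charFun μ (k + 2 : ℕ)‖ ^ 2 / (((k : ℝ) + 2) ^ 2 - 1) ≤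
      ‖charFun μ 0‖ ^ 2 + ‖charFun μ 1‖ ^ 2 / 2 := by
  simpa only [charFun_conv_map_neg, Complex.ofReal_re] using
    two_mul_tsum_re_charFun_div_le (μ.conv (μ.map ((-1 : ℝ) • ·)))

end CharFun

section IsoperimetricDeficit

/-- The isoperimetric deficit `L² / (4π) - A` of the closed convex curve of perimeter `L = 1`
whose tangent direction has law `μ`, given by Hurwitz's series in `charFun μ k = E[exp (i k X)]`.
The series makes sense even if `charFun μ 1 ≠ 0`, when no such curve exists. -/
noncomputable def isoperimetricDeficit (μ : Measure ℝ) : ℝ :=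
  1 / (2 * π) * ∑' k : ℕ, ‖charFun μ (k + 2 : ℕ)‖ ^ 2 / (((k : ℝ) + 2) ^ 2 - 1)

lemma hasSum_isoperimetricDeficit (μ : Measure ℝ) [IsFiniteMeasure μ] :
    HasSum (fun k : ℕ => 1 / (2 * π) *
      (‖charFun μ (k + 2 : ℕ)‖ ^ 2 / (((k : ℝ) + 2) ^ 2 - 1))) (isoperimetricDeficit μ) :=
  (summable_norm_charFun_sq_div μ).hasSum.mul_left _

lemma isoperimetricDeficit_le (μ : Measure ℝ) [IsFiniteMeasure μ] :
    isoperimetricDeficit μ ≤ (μ.real univ ^ 2 + ‖charFun μ 1‖ ^ 2 / 2) / (4 * π) := by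
  have hmass : ‖charFun μ 0‖ = μ.real univ := by simp
  have hsum := two_mul_tsum_norm_charFun_sq_div_le μ
  rw [hmass] at hsum
  rw [isoperimetricDeficit, le_div_iff₀ (by positivity)]
  refine le_of_eq_of_le ?_ hsum
  field_simp
  norm_num [mul_comm]

lemma isoperimetricDeficit_convexComb_le (μ ν : Measure ℝ) [IsFiniteMeasure μ] [IsFiniteMeasure ν]
    {a b : ℝ} (ha : 0 ≤ a) (hb : 0 ≤ b) (hab : a + b = 1) :
    isoperimetricDeficit (ENNReal.ofReal a • μ + ENNReal.ofReal b • ν) ≤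
      a * isoperimetricDeficit μ + b * isoperimetricDeficit ν := by
  refine hasSum_le (fun k => ?_) (hasSum_isoperimetricDeficit _)
    (((hasSum_isoperimetricDeficit μ).mul_left a).add ((hasSum_isoperimetricDeficit ν).mul_left b))
  have hk := add_two_sq_sub_one_pos k
  calc _ ≤ 1 / (2 * π) * ((a * ‖charFun μ (k + 2 : ℕ)‖ ^ 2 + b * ‖charFun ν (k + 2 : ℕ)‖ ^ 2) /
        (((k : ℝ) + 2) ^ 2 - 1)) := by
        gcongr
        exact norm_charFun_convexComb_sq_le μ ν _ ha hb hab
    _ = _ := by ring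

end IsoperimetricDeficit

section Area

lemma areaH_eq_sub_isoperimetricDeficit (μ : Measure ℝ) [IsFiniteMeasure μ] :
    areaH μ = 1 / (4 * π) - isoperimetricDeficit μ := by
  have hterm (k : ℕ) : (aF μ (k + 2) ^ 2 + bF μ (k + 2) ^ 2) / (((k : ℝ) + 2) ^ 2 - 1) =
      1 / π ^ 2 * (‖charFun μ (k + 2 : ℕ)‖ ^ 2 / (((k : ℝ) + 2) ^ 2 - 1)) := by
    rw [aF, bF, ← re_charFun_real, ← im_charFun_real, Complex.sq_norm, Complex.normSq_apply]
    ring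
  rw [areaH, isoperimetricDeficit, tsum_congr hterm, tsum_mul_left]
  field_simp

lemma areaH_nonneg (μ : Measure ℝ) [IsProbabilityMeasure μ] (hμ : charFun μ 1 = 0) :
    0 ≤ areaH μ := by
  rw [areaH_eq_sub_isoperimetricDeficit, sub_nonneg]
  simpa [hμ] using isoperimetricDeficit_le μ

lemma convexComb_areaH_le (μ ν : Measure ℝ) [IsFiniteMeasure μ] [IsFiniteMeasure ν]
    {a b : ℝ} (ha : 0 ≤ a) (hb : 0 ≤ b) (hab : a + b = 1) :
    a * areaH μ + b * areaH ν ≤ areaH (ENNReal.ofReal a • μ + ENNReal.ofReal b • ν) := by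
  simp only [areaH_eq_sub_isoperimetricDeficit]
  calc _ = (a + b) * (1 / (4 * π)) - (a * isoperimetricDeficit μ + b * isoperimetricDeficit ν) := by
        ring
    _ ≤ _ := by
        rw [hab, one_mul]
        exact sub_le_sub_left (isoperimetricDeficit_convexComb_le μ ν ha hb hab) _

end Area

theorem stmt12_general (μ ν : Measure ℝ) [IsProbabilityMeasure μ] [IsProbabilityMeasure ν]
    (hμ0 : ∫ x, Complex.exp (Complex.I * x) ∂μ = 0)
    (hν0 : ∫ x, Complex.exp (Complex.I * x) ∂ν = 0)
    (l : ℝ) (hl : l ∈ Set.Icc (0 : ℝ) 1) :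
    l * Real.sqrt (areaH μ) + (1 - l) * Real.sqrt (areaH ν) ≤
      Real.sqrt (areaH (ENNReal.ofReal l • μ + ENNReal.ofReal (1 - l) • ν))
    ∧ min (areaH μ) (areaH ν) ≤ areaH (ENNReal.ofReal l • μ + ENNReal.ofReal (1 - l) • ν) := by
  have h1l : 0 ≤ 1 - l := sub_nonneg.2 hl.2
  have hconcave := convexComb_areaH_le μ ν hl.1 h1l (add_sub_cancel l 1)
  have hcenter (η : Measure ℝ) : charFun η 1 = ∫ x, Complex.exp (Complex.I * x) ∂η := by
    simp [charFun_apply_real, mul_comm]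
  constructor
  · calc l * √(areaH μ) + (1 - l) * √(areaH ν) ≤ √(l * areaH μ + (1 - l) * areaH ν) :=
          Real.strictConcaveOn_sqrt.concaveOn.2 (areaH_nonneg μ ((hcenter μ).trans hμ0))
            (areaH_nonneg ν ((hcenter ν).trans hν0)) hl.1 h1l (add_sub_cancel l 1)
      _ ≤ _ := Real.sqrt_le_sqrt hconcave
  · exact (Convex.min_le_combo _ _ hl.1 h1l (add_sub_cancel l 1)).trans hconcave

theorem stmt12 (μ ν : Measure ℝ) [IsProbabilityMeasure μ] [IsProbabilityMeasure ν]
    (hμs : μ (Set.Ico 0 (2*π))ᶜ = 0) (hνs : ν (Set.Ico 0 (2*π))ᶜ = 0)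
    (hμ0 : ∫ x, Complex.exp (Complex.I * x) ∂μ = 0)
    (hν0 : ∫ x, Complex.exp (Complex.I * x) ∂ν = 0)
    (l : ℝ) (hl : l ∈ Set.Icc (0:ℝ) 1) :
    l * Real.sqrt (areaH μ) + (1-l) * Real.sqrt (areaH ν) ≤
      Real.sqrt (areaH (ENNReal.ofReal l • μ + ENNReal.ofReal (1-l) • ν))
    ∧ min (areaH μ) (areaH ν) ≤ areaH (ENNReal.ofReal l • μ + ENNReal.ofReal (1-l) • ν) :=
  stmt12_general μ ν hμ0 hν0 l hl
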